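/- arXiv:1907.07019 — 2 statements merged into one kernel-verified Lean document; each statement's English description precedes it below -/
import Mathlib

section
/- Let Ω = ℕ × {A,B}, let Σ₀ be the σ-algebra generated by the sets Eₙ = {n} × {A,B} for n ∈ ℕ, and let Σ₁ be the powerset of Ω. Let π₀ be the probability measure on Σ₀ with π₀(E₀) = 1/2 and π₀(Eₙ) = 3⁻ⁿ for n ≥ 1, and let π₁ be the probability measure on Σ₁ with π₁({(n,A)}) = 2⁻ⁿ for n ≥ 1 and π₁({(0,A)}) = π₁({(n,B)}) = 0 for all n. Then π₁ is commensurate to π₀ (conditions C1 and C2 hold), but (π₀,π₁) does not satisfy extended Bayesianism. -/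
open MeasureTheory Set ENNReal

/-- The support of a measure `π` on `(Ω, m)`: the intersection of all `m`-measurable
sets of `π`-measure one. -/
def spt {Ω : Type*} (m : MeasurableSpace Ω) (π : @Measure Ω m) : Set Ω :=
  ⋂₀ {E : Set Ω | @MeasurableSet Ω m E ∧ π E = 1}

/-- The outer measure on richer events induced by a measure `π` on `(Ω, m)`:
`π*(E) = inf {π F : F m-measurable, E ⊆ F}`. -/
noncomputable def outerM {Ω : Type*} (m : MeasurableSpace Ω) (π : @Measure Ω m)
    (E : Set Ω) : ℝ≥0∞ :=
  ⨅ (F : Set Ω) (_ : @MeasurableSet Ω m F ∧ E ⊆ F), π F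

/-- Extended Bayesianism: there is a probability measure `π̄` on the finer σ-algebra `m1`
extending `π₀` (EB1) such that, whenever `π₀*(S₁) > 0`, `π̄(S₁) > 0` and `π₁` is the
conditional of `π̄` on `S₁` (EB2). -/
def ExtendedBayesianism {Ω : Type*} (m0 m1 : MeasurableSpace Ω)
    (π₀ : @Measure Ω m0) (π₁ : @Measure Ω m1) : Prop :=
  ∃ πb : @Measure Ω m1, @IsProbabilityMeasure Ω m1 πb ∧
    (∀ E : Set Ω, @MeasurableSet Ω m0 E → πb E = π₀ E) ∧
    (0 < outerM m0 π₀ (spt m1 π₁) →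
      0 < πb (spt m1 π₁) ∧
      ∀ E : Set Ω, @MeasurableSet Ω m1 E →
        π₁ E = πb (E ∩ spt m1 π₁) / πb (spt m1 π₁))

/-- `π₁` is commensurate to `π₀`: for all `E, F ∈ Σ₀` with `E ⊆ S₁`,
(C1) `π₀ F = 0 → π₁ F = 0` and (C2) `π₀ E * π₁ F ≤ π₁ E * π₀ F`. -/
def Commensurate {Ω : Type*} (m0 m1 : MeasurableSpace Ω)
    (π₀ : @Measure Ω m0) (π₁ : @Measure Ω m1) : Prop :=
  ∀ E F : Set Ω, @MeasurableSet Ω m0 E → @MeasurableSet Ω m0 F → E ⊆ spt m1 π₁ →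
    (π₀ F = 0 → π₁ F = 0) ∧ π₀ E * π₁ F ≤ π₁ E * π₀ F

/-- `π₁` is boundedly commensurate to `π₀`: commensurate, and in addition (C3)
`inf {π₀ F / π₁ F : F ∈ Σ₀, π₁ F > 0} > 0`. -/
def BoundedlyCommensurate {Ω : Type*} (m0 m1 : MeasurableSpace Ω)
    (π₀ : @Measure Ω m0) (π₁ : @Measure Ω m1) : Prop :=
  Commensurate m0 m1 π₀ π₁ ∧
    0 < ⨅ (F : Set Ω) (_ : @MeasurableSet Ω m0 F ∧ 0 < π₁ F), π₀ F / π₁ F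

/-- The σ-algebra on `ℕ × Bool` generated by the sets `Eₙ = {n} × {A, B}`
(`A := true`, `B := false`). -/
def sigmaEx : MeasurableSpace (ℕ × Bool) :=
  MeasurableSpace.generateFrom {E : Set (ℕ × Bool) | ∃ n : ℕ, E = {n} ×ˢ (Set.univ : Set Bool)}

/-!
If `(π₀, π₁)` satisfies extended Bayesianism through `π̄` and `S₁` has positive outer measure, then
`π̄ S₁ * π₁ F = π̄ (F ∩ S₁) ≤ π₀ F` for every `F ∈ Σ₀`, so `π̄ S₁ > 0` is a lower bound for the
ratios `π₀ F / π₁ F`. On a countable space `π₁ S₁ = 1`, so for a commensurate pair (C1) prevents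
`S₁` from being covered by a `π₀`-null event; such a pair satisfying extended Bayesianism is
therefore boundedly commensurate. In the example `Σ₀` consists of the unions of columns: every
nonempty event has positive prior probability and no nonempty event lies inside `S₁`, which avoids
`ℕ × {B}`, so commensurability is immediate. The ratios on the columns are `(2/3)ⁿ`, whose infimum
is `0`.
-/

section Support

variable {Ω : Type*} {m : MeasurableSpace Ω} {π : Measure Ω} [IsProbabilityMeasure π]

theorem mem_spt_of_measure_singleton_ne_zero {x : Ω} (hx : π {x} ≠ 0) : x ∈ spt m π := by
  rintro E ⟨hE, hE_one⟩
  by_contra hxE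
  have hE_compl : π Eᶜ = 0 := (prob_compl_eq_zero_iff hE).2 hE_one
  exact hx (measure_mono_null (singleton_subset_iff.2 hxE) hE_compl)

theorem disjoint_spt_of_measure_eq_zero {N : Set Ω} (hN : MeasurableSet N) (hN_zero : π N = 0) :
    Disjoint (spt m π) N :=
  subset_compl_iff_disjoint_right.1 <|
    sInter_subset_of_mem ⟨hN.compl, (prob_compl_eq_one_iff hN).2 hN_zero⟩

theorem ae_mem_spt [Countable Ω] : ∀ᵐ x ∂π, x ∈ spt m π :=
  ae_iff_of_countable.2 fun _ => mem_spt_of_measure_singleton_ne_zero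

theorem measure_spt_eq_one [Countable Ω] : π (spt m π) = 1 :=
  (measure_congr (Filter.eventuallyEq_univ.2 ae_mem_spt)).trans measure_univ

end Support

section OuterMeasure

variable {Ω : Type*} {m : MeasurableSpace Ω} {π : Measure Ω}

theorem outerM_eq_measure (E : Set Ω) : outerM m π E = π E := by
  simp only [outerM, measure_eq_iInf E, iInf_and, iInf_comm (ι := MeasurableSet _)]

theorem exists_measurable_superset_of_outerM_eq_zero {E : Set Ω} (hE : outerM m π E = 0) :
    ∃ F, E ⊆ F ∧ MeasurableSet F ∧ π F = 0 :=
  exists_measurable_superset_of_null ((outerM_eq_measure E).symm.trans hE)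

end OuterMeasure

section TwoMeasures

variable {Ω : Type*} {m0 m1 : MeasurableSpace Ω} {π₀ : @Measure Ω m0} {π₁ : @Measure Ω m1}

theorem commensurate_of_null_of_null_of_subset_spt
    (hnull : ∀ F, MeasurableSet[m0] F → π₀ F = 0 → π₁ F = 0)
    (hspt : ∀ E, MeasurableSet[m0] E → E ⊆ spt m1 π₁ → π₀ E = 0) :
    Commensurate m0 m1 π₀ π₁ := by
  refine fun E F hE hF hES => ⟨hnull F hF, ?_⟩
  rw [hspt E hE hES, zero_mul]
  exact zero_le

theorem Commensurate.measure_eq_zero (h : Commensurate m0 m1 π₀ π₁) {F : Set Ω}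
    (hF : MeasurableSet[m0] F) (hF_zero : π₀ F = 0) : π₁ F = 0 :=
  (h ∅ F (@MeasurableSet.empty Ω m0) hF (empty_subset _)).1 hF_zero

theorem Commensurate.outerM_spt_pos [Countable Ω] [IsProbabilityMeasure π₁]
    (h : Commensurate m0 m1 π₀ π₁) : 0 < outerM m0 π₀ (spt m1 π₁) := by
  refine pos_iff_ne_zero.2 fun hS => ?_
  obtain ⟨F, hSF, hF, hF_zero⟩ := exists_measurable_superset_of_outerM_eq_zero hS
  have hS_zero : π₁ (spt m1 π₁) = 0 := measure_mono_null hSF (h.measure_eq_zero hF hF_zero)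
  exact zero_ne_one (hS_zero.symm.trans measure_spt_eq_one)

theorem ExtendedBayesianism.exists_pos_mul_le (hm : m0 ≤ m1)
    (h : ExtendedBayesianism m0 m1 π₀ π₁) (hS : 0 < outerM m0 π₀ (spt m1 π₁)) :
    ∃ c : ℝ≥0∞, 0 < c ∧ ∀ F, MeasurableSet[m0] F → c * π₁ F ≤ π₀ F := by
  obtain ⟨πb, hπb, hext, hcond⟩ := h
  obtain ⟨hS_pos, hπ₁⟩ := hcond hS
  refine ⟨πb (spt m1 π₁), hS_pos, fun F hF => ?_⟩
  calc πb (spt m1 π₁) * π₁ F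
      = πb (F ∩ spt m1 π₁) := by
        rw [hπ₁ F (hm F hF), ENNReal.mul_div_cancel hS_pos.ne' (measure_ne_top πb _)]
    _ ≤ πb F := measure_mono inter_subset_left
    _ = π₀ F := hext F hF

theorem Commensurate.boundedlyCommensurate_of_extendedBayesianism [Countable Ω]
    [IsProbabilityMeasure π₁] (hm : m0 ≤ m1) (h : Commensurate m0 m1 π₀ π₁)
    (hEB : ExtendedBayesianism m0 m1 π₀ π₁) : BoundedlyCommensurate m0 m1 π₀ π₁ := by
  obtain ⟨c, hc_pos, hc⟩ := hEB.exists_pos_mul_le hm h.outerM_spt_pos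
  refine ⟨h, hc_pos.trans_le (le_iInf₂ fun F hF => ?_)⟩
  rw [ENNReal.le_div_iff_mul_le (.inl hF.2.ne') (.inl (measure_ne_top π₁ F))]
  exact hc F hF.1

theorem not_boundedlyCommensurate_of_tendsto_div {ι : Type*} {l : Filter ι} [l.NeBot]
    {F : ι → Set Ω} (hF : ∀ᶠ i in l, MeasurableSet[m0] (F i) ∧ 0 < π₁ (F i))
    (hlim : Filter.Tendsto (fun i => π₀ (F i) / π₁ (F i)) l (nhds 0)) :
    ¬ BoundedlyCommensurate m0 m1 π₀ π₁ := by
  rintro ⟨-, hinf⟩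
  exact hinf.not_ge (ge_of_tendsto hlim (hF.mono fun i hi => iInf₂_le (F i) hi))

end TwoMeasures

theorem tendsto_inv_pow_div_inv_pow_of_lt {a b : ℝ≥0∞} (h : b < a) :
    Filter.Tendsto (fun n : ℕ => a⁻¹ ^ n / b⁻¹ ^ n) Filter.atTop (nhds 0) := by
  have hratio : ∀ n : ℕ, (b / a) ^ n = a⁻¹ ^ n / b⁻¹ ^ n := fun n => by
    rw [div_eq_mul_inv (a⁻¹ ^ n), ENNReal.inv_pow, inv_inv, ← mul_pow, mul_comm, div_eq_mul_inv]
  exact (ENNReal.tendsto_pow_atTop_nhds_zero_of_lt_one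
    (ENNReal.div_lt_of_lt_mul (by rwa [one_mul]))).congr hratio

section Columns

theorem measurableSet_sigmaEx_iff {E : Set (ℕ × Bool)} :
    MeasurableSet[sigmaEx] E ↔ ∃ A : Set ℕ, E = A ×ˢ (univ : Set Bool) := by
  constructor
  · have hle : sigmaEx ≤ MeasurableSpace.comap Prod.fst ⊤ :=
      MeasurableSpace.generateFrom_le fun _ ⟨n, hn⟩ => ⟨{n}, trivial, hn ▸ prod_univ.symm⟩
    intro hE
    obtain ⟨A, -, rfl⟩ := hle E hE
    exact ⟨A, prod_univ.symm⟩
  · rintro ⟨A, rfl⟩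
    rw [← biUnion_of_singleton A, iUnion₂_prod_const]
    exact MeasurableSet.biUnion A.to_countable fun n _ =>
      MeasurableSpace.measurableSet_generateFrom ⟨n, rfl⟩

theorem eq_empty_of_measure_eq_zero_of_column_pos {π₀ : @Measure (ℕ × Bool) sigmaEx}
    (hpos : ∀ n : ℕ, 0 < π₀ ({n} ×ˢ (univ : Set Bool))) {F : Set (ℕ × Bool)}
    (hF : MeasurableSet[sigmaEx] F) (hF_zero : π₀ F = 0) : F = ∅ := by
  obtain ⟨A, rfl⟩ := measurableSet_sigmaEx_iff.1 hF
  have hA : A = ∅ := eq_empty_of_forall_notMem fun n hn =>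
    (hpos n).ne' (measure_mono_null (prod_mono_left (singleton_subset_iff.2 hn)) hF_zero)
  rw [hA, empty_prod]

variable {π₁ : @Measure (ℕ × Bool) ⊤}

theorem eq_empty_of_subset_spt_of_singleton_false_null [IsProbabilityMeasure π₁]
    (hB : ∀ n : ℕ, π₁ {(n, false)} = 0)
    {E : Set (ℕ × Bool)} (hE : MeasurableSet[sigmaEx] E) (hES : E ⊆ spt ⊤ π₁) : E = ∅ := by
  obtain ⟨A, rfl⟩ := measurableSet_sigmaEx_iff.1 hE
  have hA : A = ∅ := eq_empty_of_forall_notMem fun n hn =>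
    have hdisj : Disjoint (spt ⊤ π₁) {(n, false)} :=
      disjoint_spt_of_measure_eq_zero MeasurableSpace.measurableSet_top (hB n)
    disjoint_singleton_right.1 hdisj (hES (mk_mem_prod hn (mem_univ false)))
  rw [hA, empty_prod]

theorem commensurate_of_column_pos_of_singleton_false_null
    {π₀ : @Measure (ℕ × Bool) sigmaEx} [IsProbabilityMeasure π₁]
    (hpos : ∀ n : ℕ, 0 < π₀ ({n} ×ˢ (univ : Set Bool))) (hB : ∀ n : ℕ, π₁ {(n, false)} = 0) :
    Commensurate sigmaEx ⊤ π₀ π₁ := by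
  refine commensurate_of_null_of_null_of_subset_spt (fun F hF hF_zero => ?_) (fun E hE hES => ?_)
  · rw [eq_empty_of_measure_eq_zero_of_column_pos hpos hF hF_zero, measure_empty]
  · rw [eq_empty_of_subset_spt_of_singleton_false_null hB hE hES, measure_empty]

theorem measure_column_eq_measure_singleton_true {n : ℕ} (hB : π₁ {(n, false)} = 0) :
    π₁ ({n} ×ˢ (univ : Set Bool)) = π₁ {(n, true)} := by
  rw [Bool.univ_eq, insert_eq, prod_union, singleton_prod_singleton, singleton_prod_singleton]
  exact measure_congr (union_ae_eq_right_of_ae_eq_empty (ae_eq_empty.2 hB))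

theorem not_boundedlyCommensurate_of_column_eq_inv_pow {π₀ : @Measure (ℕ × Bool) sigmaEx}
    {a b : ℝ≥0∞} (hba : b < a)
    (hπ₀ : ∀ n : ℕ, 1 ≤ n → π₀ ({n} ×ˢ (univ : Set Bool)) = a⁻¹ ^ n)
    (hπ₁ : ∀ n : ℕ, 1 ≤ n → π₁ ({n} ×ˢ (univ : Set Bool)) = b⁻¹ ^ n) :
    ¬ BoundedlyCommensurate sigmaEx ⊤ π₀ π₁ := by
  refine not_boundedlyCommensurate_of_tendsto_div (l := Filter.atTop)
    (F := fun n : ℕ => {n} ×ˢ univ) ?_ ?_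
  · filter_upwards [Filter.eventually_ge_atTop 1] with n hn
    rw [hπ₁ n hn]
    exact ⟨measurableSet_sigmaEx_iff.2 ⟨{n}, rfl⟩,
      ENNReal.pow_pos (ENNReal.inv_pos.2 hba.ne_top) n⟩
  · refine (tendsto_inv_pow_div_inv_pow_of_lt hba).congr' ?_
    filter_upwards [Filter.eventually_ge_atTop 1] with n hn
    rw [hπ₀ n hn, hπ₁ n hn]

end Columns

/-- Example 4: with `Ω = ℕ × {A, B}`, `Σ₀` generated by the columns
`Eₙ = {n} × {A, B}`, `Σ₁` the powerset, `π₀ E₀ = 1/2`, `π₀ Eₙ = 3⁻ⁿ` for `n ≥ 1`,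
`π₁ {(n,A)} = 2⁻ⁿ` for `n ≥ 1` and `π₁ {(0,A)} = π₁ {(n,B)} = 0`, the measure `π₁` is
commensurate to `π₀` but `(π₀, π₁)` does not satisfy extended Bayesianism. -/
theorem commensurate_not_extendedBayesianism_example
    (π₀ : @Measure (ℕ × Bool) sigmaEx)
    (h₀ : @IsProbabilityMeasure (ℕ × Bool) sigmaEx π₀)
    (π₁ : @Measure (ℕ × Bool) ⊤)
    (h₁ : @IsProbabilityMeasure (ℕ × Bool) ⊤ π₁)
    (h₀0 : π₀ ({0} ×ˢ (Set.univ : Set Bool)) = 1 / 2)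
    (h₀n : ∀ n : ℕ, 1 ≤ n → π₀ ({n} ×ˢ (Set.univ : Set Bool)) = (3 : ℝ≥0∞)⁻¹ ^ n)
    (h₁A0 : π₁ {((0 : ℕ), true)} = 0)
    (h₁An : ∀ n : ℕ, 1 ≤ n → π₁ {((n : ℕ), true)} = (2 : ℝ≥0∞)⁻¹ ^ n)
    (h₁B : ∀ n : ℕ, π₁ {((n : ℕ), false)} = 0) :
    Commensurate sigmaEx ⊤ π₀ π₁ ∧ ¬ ExtendedBayesianism sigmaEx ⊤ π₀ π₁ := by
  have hcolumn₀ : ∀ n : ℕ, 0 < π₀ ({n} ×ˢ (univ : Set Bool)) := by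
    intro n
    rcases n.eq_zero_or_pos with rfl | hn
    · rw [h₀0]
      exact ENNReal.half_pos one_ne_zero
    · rw [h₀n n hn]
      exact ENNReal.pow_pos (ENNReal.inv_pos.2 ofNat_ne_top) n
  have hcolumn₁ : ∀ n : ℕ, 1 ≤ n → π₁ ({n} ×ˢ (univ : Set Bool)) = 2⁻¹ ^ n := fun n hn =>
    (measure_column_eq_measure_singleton_true (h₁B n)).trans (h₁An n hn)
  have hcomm : Commensurate sigmaEx ⊤ π₀ π₁ :=
    commensurate_of_column_pos_of_singleton_false_null hcolumn₀ h₁B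
  have hnot_bounded : ¬ BoundedlyCommensurate sigmaEx ⊤ π₀ π₁ :=
    not_boundedlyCommensurate_of_column_eq_inv_pow (by norm_num) h₀n hcolumn₁
  exact ⟨hcomm, fun hEB =>
    hnot_bounded (hcomm.boundedlyCommensurate_of_extendedBayesianism le_top hEB)⟩
end

section
/- Let Ω = Ω₀ × Ω₁ be a product of two finite sets, let Σ₀ = {F₀ × Ω₁ : F₀ ⊆ Ω₀} be the σ-algebra of cylinders on the first coordinate, and let Σ₁ be the powerset of Ω. Suppose the support S₁ of π₁ has the form Ω₀ × E₁ with E₁ ⊆ Ω₁, E₁ ≠ ∅ and E₁ ≠ Ω₁. Then S₁ is completely non-measurable (no nonempty subset of S₁ belongs to Σ₀), and (π₀,π₁) satisfies extended Bayesianism (with π₀*(S₁) > 0) if and only if for all F ∈ Σ₀, π₀(F) = 0 implies π₁(F) = 0. -/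
open MeasureTheory Set ENNReal

open Filter Topology NNReal

/-!
As `Σ₀` is finite, `π₁ ≪ π₀` on `Σ₀` already gives `ε π₁ ≤ π₀` on `Σ₀` for some `ε > 0`. Every
atom of `Σ₀` leaves the completely non-measurable set `S₁`, so the remaining mass `π₀ - ε π₁` of
each atom can be moved to a point of that atom outside `S₁`. Adding `ε π₁`, which lives on `S₁`,
gives an extension of `π₀` whose conditional on `S₁` is `π₁`; and `ε π₁ ≤ π₀` on `Σ₀` forces
`π₀*(S₁) ≥ ε`. Conversely, a `π₀`-null event of `Σ₀` is null for any extension of `π₀`, hence for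
its conditional on `S₁`.
-/

/-- The completely non-measurable events: those with no nonempty `m`-measurable subset. For such a
support and finite `m`, extended Bayesianism reduces to absolute continuity on `m`. -/
def CompletelyNonmeasurable {Ω : Type*} (m : MeasurableSpace Ω) (S : Set Ω) : Prop :=
  ∀ F : Set Ω, F ⊆ S → F.Nonempty → ¬ MeasurableSet[m] F

section SingleSigmaAlgebra

variable {Ω : Type*} {m : MeasurableSpace Ω}

theorem measurableSet_of_measurableAtom_subset [Countable Ω] {S : Set Ω}
    (hS : ∀ ω ∈ S, measurableAtom ω ⊆ S) : MeasurableSet S := by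
  have hS_eq : S = ⋃ ω ∈ S, measurableAtom ω :=
    Subset.antisymm (fun ω hω ↦ mem_iUnion₂_of_mem hω (mem_measurableAtom_self ω))
      (iUnion₂_subset hS)
  rw [hS_eq]
  exact .biUnion S.to_countable fun ω _ ↦ .measurableAtom_of_countable ω

theorem measurableSet_spt [Countable Ω] (π : Measure Ω) : MeasurableSet (spt m π) :=
  measurableSet_of_measurableAtom_subset fun _ hω ↦
    subset_sInter fun E hE ↦ measurableAtom_subset hE.1 (hω E hE)

theorem measure_compl_spt [Countable Ω] (π : Measure Ω) [IsProbabilityMeasure π] :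
    π (spt m π)ᶜ = 0 := by
  rw [measure_null_iff_singleton (to_countable _)]
  intro ω hω
  obtain ⟨E, ⟨hE, hE_one⟩, hωE⟩ : ∃ E, (MeasurableSet E ∧ π E = 1) ∧ ω ∉ E := by
    simpa [spt, and_assoc] using hω
  exact measure_mono_null (singleton_subset_iff.2 hωE) ((prob_compl_eq_zero_iff hE).2 hE_one)

theorem exists_pos_smul_le_of_absolutelyContinuous
    (hfin : {E : Set Ω | MeasurableSet E}.Finite) {μ ν : Measure Ω} [IsFiniteMeasure ν]
    (hνμ : ν ≪ μ) : ∃ ε : ℝ≥0, 0 < ε ∧ ε • ν ≤ μ := by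
  have eventually_mul_le (E : Set Ω) : ∀ᶠ ε : ℝ≥0 in 𝓝[>] 0, ε * ν E ≤ μ E := by
    rcases eq_or_ne (μ E) 0 with hE | hE
    · simp [hE, hνμ hE]
    · have tendsto_zero : Tendsto (fun ε : ℝ≥0 ↦ ε * ν E) (𝓝 0) (𝓝 0) := by
        have coe_tendsto_zero : Tendsto ((↑) : ℝ≥0 → ℝ≥0∞) (𝓝 0) (𝓝 0) :=
          ENNReal.tendsto_coe.2 tendsto_id
        simpa using ENNReal.Tendsto.mul_const coe_tendsto_zero (.inr (measure_ne_top ν E))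
      exact (tendsto_zero.eventually_le_const hE.bot_lt).filter_mono nhdsWithin_le_nhds
  obtain ⟨ε, hε, hε_pos⟩ :=
    (((eventually_all_finite hfin).2 fun E _ ↦ eventually_mul_le E).and self_mem_nhdsWithin).exists
  exact ⟨ε, hε_pos, Measure.le_iff.2 hε⟩

theorem CompletelyNonmeasurable.exists_retraction_notMem [Countable Ω] {S : Set Ω}
    (hS : CompletelyNonmeasurable m S) :
    ∃ r : Ω → Ω, (∀ ω, r ω ∉ S) ∧ (∀ B, MeasurableSet (r ⁻¹' B)) ∧
      ∀ E, MeasurableSet E → r ⁻¹' E = E := by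
  have atom_diff_nonempty (ω : Ω) : (measurableAtom ω \ S).Nonempty :=
    sdiff_nonempty.2 fun h ↦ hS _ h ⟨ω, mem_measurableAtom_self ω⟩ (.measurableAtom_of_countable ω)
  obtain ⟨r, hr_mem, hr_const⟩ : ∃ r : Ω → Ω, (∀ ω, r ω ∈ measurableAtom ω \ S) ∧
      ∀ ω, ∀ η ∈ measurableAtom ω, r η = r ω := by
    -- `pick` depends on the atom alone, so the resulting `r` is constant on atoms.
    let pick : {A : Set Ω // (A \ S).Nonempty} → Ω := fun A ↦ A.2.some
    refine ⟨fun ω ↦ pick ⟨measurableAtom ω, atom_diff_nonempty ω⟩,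
      fun ω ↦ (atom_diff_nonempty ω).some_mem, fun ω η hη ↦ ?_⟩
    simp only [measurableAtom_eq_of_mem hη]
  refine ⟨r, fun ω ↦ (hr_mem ω).2, fun B ↦ ?_, fun E hE ↦ ?_⟩
  · refine measurableSet_of_measurableAtom_subset fun ω hω η hη ↦ ?_
    rwa [mem_preimage, hr_const ω η hη]
  · ext ω
    refine ⟨fun hrω ↦ ?_, fun hω ↦ measurableAtom_subset hE hω (hr_mem ω).1⟩
    by_contra hω
    exact measurableAtom_subset hE.compl hω (hr_mem ω).1 hrω

end SingleSigmaAlgebra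

section Extension

variable {Ω : Type*} {m0 m1 : MeasurableSpace Ω} {π₀ : Measure[m0] Ω} {π₁ : Measure[m1] Ω}
  {S : Set Ω}

theorem CompletelyNonmeasurable.exists_trim_eq_null [Countable Ω]
    (hS : CompletelyNonmeasurable m0 S) (hm : m0 ≤ m1) (hS_meas : MeasurableSet[m1] S)
    (μ : Measure[m0] Ω) : ∃ ν : Measure[m1] Ω, ν.trim hm = μ ∧ ν S = 0 := by
  obtain ⟨r, hrS, hr_meas, hr_inv⟩ := hS.exists_retraction_notMem
  have hr : Measurable[m0, m1] r := fun B _ ↦ hr_meas B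
  refine ⟨@Measure.map Ω Ω m0 m1 r μ, @Measure.ext _ m0 _ _ fun E hE ↦ ?_, ?_⟩
  · rw [trim_measurableSet_eq hm hE, Measure.map_apply hr (hm E hE), hr_inv E hE]
  · rw [Measure.map_apply hr hS_meas, preimage_eq_empty_iff.2, measure_empty]
    exact disjoint_left.2 fun _ hω ⟨ω, h⟩ ↦ hrS ω (h ▸ hω)

theorem CompletelyNonmeasurable.exists_trim_eq_restrict_eq_smul [Countable Ω]
    [IsFiniteMeasure π₀] (hS : CompletelyNonmeasurable m0 S) (hm : m0 ≤ m1)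
    (hS_meas : MeasurableSet[m1] S) (hπ₁ : π₁ Sᶜ = 0) {ε : ℝ≥0} (hε : ε • π₁.trim hm ≤ π₀) :
    ∃ πb : Measure[m1] Ω, πb.trim hm = π₀ ∧ πb.restrict S = ε • π₁ := by
  have : @IsFiniteMeasure Ω m0 (ε • π₁.trim hm) := isFiniteMeasure_of_le π₀ hε
  obtain ⟨ν, hν_trim, hνS⟩ := hS.exists_trim_eq_null hm hS_meas (π₀ - ε • π₁.trim hm)
  refine ⟨ν + ε • π₁, ?_, ?_⟩
  · have trim_smul : (ε • π₁).trim hm = ε • π₁.trim hm :=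
      @Measure.ext _ m0 _ _ fun E hE ↦ by simp [trim_measurableSet_eq hm hE]
    rw [trim_add, hν_trim, trim_smul, Measure.sub_add_cancel_of_le hε]
  · rw [Measure.restrict_add, Measure.restrict_eq_zero.2 hνS, zero_add, Measure.restrict_smul,
      Measure.restrict_eq_self_of_ae_mem (mem_ae_iff.2 hπ₁)]

theorem mul_le_outerM {hm : m0 ≤ m1} {ε : ℝ≥0} (hε : ε • π₁.trim hm ≤ π₀) :
    ε * π₁ S ≤ outerM m0 π₀ S :=
  le_iInf₂ fun F ⟨_, hSF⟩ ↦ calc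
    ε * π₁ S ≤ ε * π₁.trim hm F := by gcongr; exact (measure_mono hSF).trans (le_trim hm)
    _ ≤ π₀ F := hε F

theorem ExtendedBayesianism.trim_absolutelyContinuous {hm : m0 ≤ m1}
    (h : ExtendedBayesianism m0 m1 π₀ π₁) (hpos : 0 < outerM m0 π₀ (spt m1 π₁)) :
    π₁.trim hm ≪ π₀ := by
  obtain ⟨πb, -, hπb_ext, hπb_cond⟩ := h
  refine Measure.AbsolutelyContinuous.mk fun F hF hF_null ↦ ?_
  have hπbF : πb (F ∩ spt m1 π₁) = 0 :=
    measure_mono_null inter_subset_left ((hπb_ext F hF).trans hF_null)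
  rw [trim_measurableSet_eq hm hF, (hπb_cond hpos).2 F (hm F hF), hπbF, ENNReal.zero_div]

theorem CompletelyNonmeasurable.extendedBayesianism_of_smul_trim_le [Countable Ω]
    [IsProbabilityMeasure π₀] [IsProbabilityMeasure π₁]
    (hS : CompletelyNonmeasurable m0 (spt m1 π₁)) {hm : m0 ≤ m1}
    {ε : ℝ≥0} (hε_pos : 0 < ε) (hε : ε • π₁.trim hm ≤ π₀) :
    ExtendedBayesianism m0 m1 π₀ π₁ := by
  obtain ⟨πb, hπb_trim, hπb_restrict⟩ :=
    hS.exists_trim_eq_restrict_eq_smul hm (measurableSet_spt π₁) (measure_compl_spt π₁) hε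
  have hπb_ext (E : Set Ω) (hE : MeasurableSet[m0] E) : πb E = π₀ E := by
    rw [← hπb_trim, trim_measurableSet_eq hm hE]
  have hπb_inter (E : Set Ω) (hE : MeasurableSet[m1] E) : πb (E ∩ spt m1 π₁) = ε * π₁ E := by
    rw [← Measure.restrict_apply hE, hπb_restrict, Measure.smul_apply, ENNReal.smul_def,
      smul_eq_mul]
  have hπb_spt : πb (spt m1 π₁) = ε := by simpa using hπb_inter univ .univ
  refine ⟨πb, ⟨?_⟩, hπb_ext, fun _ ↦ ⟨?_, fun E hE ↦ ?_⟩⟩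
  · rw [hπb_ext univ .univ, measure_univ]
  · simpa [hπb_spt] using hε_pos
  · rw [hπb_inter E hE, hπb_spt, mul_comm,
      ENNReal.mul_div_cancel_right (by simpa using hε_pos.ne') ENNReal.coe_ne_top]

theorem CompletelyNonmeasurable.extendedBayesianism_and_outerM_pos_iff [Countable Ω]
    [IsProbabilityMeasure π₀] [IsProbabilityMeasure π₁]
    (hS : CompletelyNonmeasurable m0 (spt m1 π₁)) (hm : m0 ≤ m1)
    (hfin : {E : Set Ω | MeasurableSet[m0] E}.Finite) :
    ExtendedBayesianism m0 m1 π₀ π₁ ∧ 0 < outerM m0 π₀ (spt m1 π₁) ↔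
      ∀ F, MeasurableSet[m0] F → π₀ F = 0 → π₁ F = 0 := by
  constructor
  · rintro ⟨hEB, hpos⟩ F - hF_null
    exact measure_eq_zero_of_trim_eq_zero hm (hEB.trim_absolutelyContinuous hpos hF_null)
  · intro hnull
    have hac : π₁.trim hm ≪ π₀ := Measure.AbsolutelyContinuous.mk fun F hF hF_null ↦ by
      rw [trim_measurableSet_eq hm hF, hnull F hF hF_null]
    obtain ⟨ε, hε_pos, hε⟩ := exists_pos_smul_le_of_absolutelyContinuous hfin hac
    have hπ₁_spt : π₁ (spt m1 π₁) = 1 :=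
      (prob_compl_eq_zero_iff (measurableSet_spt π₁)).1 (measure_compl_spt π₁)
    refine ⟨hS.extendedBayesianism_of_smul_trim_le hε_pos hε, ?_⟩
    refine lt_of_lt_of_le ?_ (mul_le_outerM hε)
    simpa [hπ₁_spt] using hε_pos

end Extension

section Cylinders

variable {Ω₀ Ω₁ : Type*}

theorem completelyNonmeasurable_univ_prod {mΩ₀ : MeasurableSpace Ω₀} {E₁ : Set Ω₁}
    (hE₁ : E₁ ≠ univ) :
    CompletelyNonmeasurable (mΩ₀.comap Prod.fst) ((univ : Set Ω₀) ×ˢ E₁) := by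
  rintro F hF ⟨⟨x, y⟩, hxy⟩ ⟨A, -, rfl⟩
  obtain ⟨e, he⟩ := (ne_univ_iff_exists_notMem E₁).1 hE₁
  exact he (hF (show (x, e) ∈ Prod.fst ⁻¹' A from hxy)).2

theorem finite_setOf_measurableSet_comap {α β : Type*} [Finite β] {m : MeasurableSpace β}
    (f : α → β) : {E : Set α | MeasurableSet[m.comap f] E}.Finite :=
  (finite_range (preimage f)).subset fun _ ⟨A, _, hA⟩ ↦ ⟨A, hA⟩

theorem product_space_example_general [Finite Ω₀] [Countable Ω₁] {mΩ₀ : MeasurableSpace Ω₀}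
    {m1 : MeasurableSpace (Ω₀ × Ω₁)} (hm : mΩ₀.comap Prod.fst ≤ m1)
    (π₀ : Measure[mΩ₀.comap Prod.fst] (Ω₀ × Ω₁)) [IsProbabilityMeasure π₀]
    (π₁ : Measure (Ω₀ × Ω₁)) [IsProbabilityMeasure π₁]
    {E₁ : Set Ω₁} (hE₁ : E₁ ≠ univ) (hS : spt m1 π₁ = univ ×ˢ E₁) :
    CompletelyNonmeasurable (mΩ₀.comap Prod.fst) (spt m1 π₁) ∧
      (ExtendedBayesianism (mΩ₀.comap Prod.fst) m1 π₀ π₁ ∧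
          0 < outerM (mΩ₀.comap Prod.fst) π₀ (spt m1 π₁) ↔
        ∀ F, MeasurableSet[mΩ₀.comap Prod.fst] F → π₀ F = 0 → π₁ F = 0) := by
  have hcn : CompletelyNonmeasurable (mΩ₀.comap Prod.fst) (spt m1 π₁) :=
    hS ▸ completelyNonmeasurable_univ_prod hE₁
  exact ⟨hcn, hcn.extendedBayesianism_and_outerM_pos_iff hm
    (finite_setOf_measurableSet_comap Prod.fst)⟩

end Cylinders

/-- Example on product spaces: with `Ω = Ω₀ × Ω₁`, `Σ₀` the σ-algebra of
cylinders on the first coordinate and `Σ₁` the powerset, if `S₁ = Ω₀ × E₁` with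
`∅ ≠ E₁ ≠ Ω₁`, then `S₁` is completely non-measurable and `(π₀, π₁)` satisfies extended
Bayesianism (with `π₀*(S₁) > 0`) iff `π₁` is absolutely continuous with respect to `π₀`
on `Σ₀`. -/
theorem product_space_example {Ω₀ Ω₁ : Type*} [Finite Ω₀] [Finite Ω₁]
    (π₀ : @Measure (Ω₀ × Ω₁) (MeasurableSpace.comap Prod.fst ⊤))
    (h₀ : @IsProbabilityMeasure (Ω₀ × Ω₁) (MeasurableSpace.comap Prod.fst ⊤) π₀)
    (π₁ : @Measure (Ω₀ × Ω₁) ⊤)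
    (h₁ : @IsProbabilityMeasure (Ω₀ × Ω₁) ⊤ π₁)
    (E₁ : Set Ω₁) (hne : E₁.Nonempty) (hproper : E₁ ≠ Set.univ)
    (hS : spt ⊤ π₁ = (Set.univ : Set Ω₀) ×ˢ E₁) :
    (∀ F : Set (Ω₀ × Ω₁), F ⊆ spt ⊤ π₁ → F.Nonempty →
        ¬ @MeasurableSet (Ω₀ × Ω₁) (MeasurableSpace.comap Prod.fst ⊤) F) ∧
      ((ExtendedBayesianism (MeasurableSpace.comap Prod.fst ⊤) ⊤ π₀ π₁ ∧
          0 < outerM (MeasurableSpace.comap Prod.fst ⊤) π₀ (spt ⊤ π₁)) ↔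
        (∀ F : Set (Ω₀ × Ω₁),
          @MeasurableSet (Ω₀ × Ω₁) (MeasurableSpace.comap Prod.fst ⊤) F →
          π₀ F = 0 → π₁ F = 0)) := by
  exact product_space_example_general le_top π₀ π₁ hproper hS
end
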